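/- Let P be an N-point set in [0,1)², and let j ∈ ℕ₀² and m ∈ 𝔻_j be such that the dyadic interval I_{j,m} contains exactly one point z of P. Then the Haar coefficient of the discrepancy function satisfies μ_{j,m} = ∫_{[0,1)²} D_P(x)·h_{j,m}(x) dx = μ_{j,m}^z − N·2^{-2|j|-4}, where μ_{j,m}^z = ∫_{[0,1)²} χ_{C_z}(x)·h_{j,m}(x) dx and C_z = [z₁,1) × [z₂,1). -/

import Mathlib

open MeasureTheory

noncomputable section

/-- The half-open unit square `[0,1) × [0,1)` in `ℝ × ℝ`. -/
def unitSq : Set (ℝ × ℝ) := Set.Ico (0:ℝ) 1 ×ˢ Set.Ico (0:ℝ) 1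

/-- The discrepancy function of the point configuration `p`. -/
def disc (N : ℕ) (p : Fin N → ℝ × ℝ) (x : ℝ × ℝ) : ℝ :=
  (∑ i : Fin N, if 0 ≤ (p i).1 ∧ (p i).1 < x.1 ∧ 0 ≤ (p i).2 ∧ (p i).2 < x.2
    then (1:ℝ) else 0) - N * x.1 * x.2

/-- The dyadic interval `I_{j,m}`. -/
def dyadic (j m : ℕ × ℕ) : Set (ℝ × ℝ) :=
  Set.Ico ((m.1:ℝ)/2^j.1) (((m.1:ℝ)+1)/2^j.1) ×ˢ
    Set.Ico ((m.2:ℝ)/2^j.2) (((m.2:ℝ)+1)/2^j.2)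

/-- The one-dimensional Haar function adapted to `[m/2^j, (m+1)/2^j)`. -/
def haar1 (j m : ℕ) (t : ℝ) : ℝ :=
  if (m:ℝ)/2^j ≤ t ∧ t < (2*(m:ℝ)+1)/2^(j+1) then 1
  else if (2*(m:ℝ)+1)/2^(j+1) ≤ t ∧ t < ((m:ℝ)+1)/2^j then -1
  else 0

/-- The two-dimensional Haar function `h_{j,m}`. -/
def haar (j m : ℕ × ℕ) (x : ℝ × ℝ) : ℝ := haar1 j.1 m.1 x.1 * haar1 j.2 m.2 x.2

/-- The characteristic function of `C_z = [z₁,1) × [z₂,1)`. -/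
def chiC (z x : ℝ × ℝ) : ℝ :=
  if z.1 ≤ x.1 ∧ x.1 < 1 ∧ z.2 ≤ x.2 ∧ x.2 < 1 then 1 else 0

/-!
Almost every `x` in the unit square lies in `C_z` exactly when `z` lies in `B_x`, so the Haar
coefficient of the counting part of `D_P` is the sum over `z ∈ P` of the coefficients of `χ_{C_z}`.
Both `χ_{C_z}` and `x₁x₂` are tensor products, so their Haar coefficients factor. The
one-dimensional step at `z_i` is constant on the `i`-th side of `I_{j,m}` unless `z_i` lies in that
side, and the Haar function has mean zero, so only points of `I_{j,m}` contribute. On the linear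
part, each factor `∫ t h(t) dt` equals `-2^{-2j_i-2}`.
-/

/-- The one-dimensional dyadic interval `I_{j,m}`, the factor of the two-dimensional ones. The
halves of `dyadicIco j m` are `dyadicIco (j + 1) (2 * m)` and `dyadicIco (j + 1) (2 * m + 1)`. -/
def dyadicIco (j m : ℕ) : Set ℝ := Set.Ico ((m : ℝ) / 2 ^ j) (((m : ℝ) + 1) / 2 ^ j)

section DyadicIco

variable {j m : ℕ}

lemma measurableSet_dyadicIco : MeasurableSet (dyadicIco j m) := measurableSet_Ico

lemma dyadicIco_subset_Ico_zero_one (hm : m < 2 ^ j) : dyadicIco j m ⊆ Set.Ico 0 1 := by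
  refine Set.Ico_subset_Ico (by positivity) ((div_le_one (by positivity)).2 ?_)
  exact_mod_cast hm

lemma dyadicIco_left_half :
    dyadicIco (j + 1) (2 * m) = Set.Ico ((m : ℝ) / 2 ^ j) ((2 * (m : ℝ) + 1) / 2 ^ (j + 1)) := by
  rw [dyadicIco, Nat.cast_mul, Nat.cast_two, pow_succ' (2 : ℝ) j,
    mul_div_mul_left _ _ (two_ne_zero' ℝ)]

lemma dyadicIco_right_half :
    dyadicIco (j + 1) (2 * m + 1) =
      Set.Ico ((2 * (m : ℝ) + 1) / 2 ^ (j + 1)) (((m : ℝ) + 1) / 2 ^ j) := by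
  have h : 2 * (m : ℝ) + 1 + 1 = 2 * (m + 1) := by ring
  rw [dyadicIco, Nat.cast_add_one, Nat.cast_mul, Nat.cast_two, h, pow_succ' (2 : ℝ) j,
    mul_div_mul_left _ _ (two_ne_zero' ℝ)]

lemma dyadicIco_halves_union :
    dyadicIco (j + 1) (2 * m) ∪ dyadicIco (j + 1) (2 * m + 1) = dyadicIco j m := by
  rw [dyadicIco_left_half, dyadicIco_right_half, dyadicIco]
  have hpow : (0 : ℝ) < 2 ^ j := by positivity
  apply Set.Ico_union_Ico_eq_Ico <;>
  · rw [pow_succ, div_le_div_iff₀ (by positivity) (by positivity)]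
    nlinarith

lemma setIntegral_dyadicIco_one : ∫ _ in dyadicIco j m, (1 : ℝ) = 1 / 2 ^ j := by
  have hle : (m : ℝ) / 2 ^ j ≤ ((m : ℝ) + 1) / 2 ^ j := by gcongr; linarith
  rw [setIntegral_const, smul_eq_mul, mul_one, dyadicIco, Real.volume_real_Ico_of_le hle]
  ring

lemma setIntegral_dyadicIco_id :
    ∫ t in dyadicIco j m, t = (2 * (m : ℝ) + 1) / 2 ^ (2 * j + 1) := by
  have hle : (m : ℝ) / 2 ^ j ≤ ((m : ℝ) + 1) / 2 ^ j := by gcongr; linarith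
  rw [dyadicIco, integral_Ico_eq_integral_Ioc, ← intervalIntegral.integral_of_le hle, integral_id]
  field_simp
  ring

end DyadicIco

section Haar1

variable {j m : ℕ}

lemma haar1_eq_indicator_sub_indicator :
    haar1 j m = (dyadicIco (j + 1) (2 * m)).indicator 1 -
      (dyadicIco (j + 1) (2 * m + 1)).indicator 1 := by
  ext t
  simp only [haar1, dyadicIco_left_half, dyadicIco_right_half, Pi.sub_apply, Set.indicator_apply,
    Set.mem_Ico, Pi.one_apply]
  split_ifs <;> linarith

lemma measurable_haar1 : Measurable (haar1 j m) := by
  rw [haar1_eq_indicator_sub_indicator]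
  exact (measurable_one.indicator measurableSet_dyadicIco).sub
    (measurable_one.indicator measurableSet_dyadicIco)

lemma abs_haar1_le_one (t : ℝ) : |haar1 j m t| ≤ 1 := by
  unfold haar1
  split_ifs <;> simp

lemma haar1_eq_zero_of_notMem {t : ℝ} (ht : t ∉ dyadicIco j m) : haar1 j m t = 0 := by
  rw [← dyadicIco_halves_union, Set.mem_union, not_or] at ht
  simp [haar1_eq_indicator_sub_indicator, ht]

lemma setIntegral_mul_haar1 (hm : m < 2 ^ j) {f : ℝ → ℝ} (hf : IntegrableOn f (Set.Ico 0 1)) :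
    ∫ t in Set.Ico 0 1, f t * haar1 j m t =
      (∫ t in dyadicIco (j + 1) (2 * m), f t) - ∫ t in dyadicIco (j + 1) (2 * m + 1), f t := by
  have hleft : dyadicIco (j + 1) (2 * m) ⊆ Set.Ico 0 1 :=
    dyadicIco_subset_Ico_zero_one (by rw [pow_succ]; lia)
  have hright : dyadicIco (j + 1) (2 * m + 1) ⊆ Set.Ico 0 1 :=
    dyadicIco_subset_Ico_zero_one (by rw [pow_succ]; lia)
  simp only [haar1_eq_indicator_sub_indicator, Pi.sub_apply, mul_sub, ← Set.indicator_mul_right,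
    Pi.one_apply, mul_one]
  rw [integral_sub (hf.indicator measurableSet_dyadicIco) (hf.indicator measurableSet_dyadicIco),
    setIntegral_indicator measurableSet_dyadicIco, setIntegral_indicator measurableSet_dyadicIco,
    Set.inter_eq_right.2 hleft, Set.inter_eq_right.2 hright]

lemma setIntegral_haar1 (hm : m < 2 ^ j) : ∫ t in Set.Ico 0 1, haar1 j m t = 0 := by
  have h := setIntegral_mul_haar1 hm (f := fun _ ↦ 1) (integrableOn_const (by simp))
  simpa only [one_mul, setIntegral_dyadicIco_one, sub_self] using h

lemma setIntegral_id_mul_haar1 (hm : m < 2 ^ j) :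
    ∫ t in Set.Ico 0 1, t * haar1 j m t = -(1 / 2 ^ (2 * j + 2)) := by
  have hid : IntegrableOn (fun t : ℝ ↦ t) (Set.Ico 0 1) :=
    continuous_id.integrableOn_Icc.mono_set Set.Ico_subset_Icc_self
  rw [setIntegral_mul_haar1 hm hid, setIntegral_dyadicIco_id, setIntegral_dyadicIco_id]
  push_cast
  field_simp
  ring

lemma setIntegral_indicator_Ico_mul_haar1_eq_zero (hm : m < 2 ^ j) {a : ℝ}
    (ha : a ∉ dyadicIco j m) :
    ∫ t in Set.Ico 0 1, (Set.Ico a 1).indicator 1 t * haar1 j m t = 0 := by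
  rcases lt_or_ge a ((m : ℝ) / 2 ^ j) with hleft | hleft
  · refine (setIntegral_congr_fun measurableSet_Ico fun t ht ↦ ?_).trans (setIntegral_haar1 hm)
    by_cases hmem : t ∈ dyadicIco j m
    · have hat : t ∈ Set.Ico a 1 := ⟨hleft.le.trans hmem.1, ht.2⟩
      simp [hat]
    · simp [haar1_eq_zero_of_notMem hmem]
  · have hright : ((m : ℝ) + 1) / 2 ^ j ≤ a := not_lt.1 fun h ↦ ha ⟨hleft, h⟩
    refine setIntegral_eq_zero_of_forall_eq_zero fun t _ ↦ ?_
    by_cases hmem : t ∈ dyadicIco j m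
    · have hat : t ∉ Set.Ico a 1 := fun h ↦ (hmem.2.trans_le hright).not_ge h.1
      simp [hat]
    · simp [haar1_eq_zero_of_notMem hmem]

end Haar1

lemma measurableSet_unitSq : MeasurableSet unitSq := measurableSet_Ico.prod measurableSet_Ico

lemma volume_unitSq : volume unitSq = 1 := by
  simp [unitSq, Measure.volume_eq_prod, Measure.prod_prod]

lemma chiC_eq_indicator (z : ℝ × ℝ) :
    chiC z = (Set.Ico z.1 1 ×ˢ Set.Ico z.2 1).indicator 1 := by
  ext x
  simp only [chiC, Set.indicator_apply, Set.mem_prod, Set.mem_Ico, and_assoc, Pi.one_apply]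

lemma chiC_eq_mul (z x : ℝ × ℝ) :
    chiC z x = (Set.Ico z.1 1).indicator 1 x.1 * (Set.Ico z.2 1).indicator 1 x.2 := by
  rw [chiC_eq_indicator]
  exact Set.indicator_prod_one

lemma integrableOn_chiC (z : ℝ × ℝ) : IntegrableOn (chiC z) unitSq := by
  rw [chiC_eq_indicator]
  exact (integrableOn_const (by simp [volume_unitSq])).indicator
    (measurableSet_Ico.prod measurableSet_Ico)

lemma integrableOn_fst_mul_snd : IntegrableOn (fun x : ℝ × ℝ ↦ x.1 * x.2) unitSq := by
  have hcont : Continuous fun x : ℝ × ℝ ↦ x.1 * x.2 := by fun_prop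
  exact (hcont.continuousOn.integrableOn_compact (isCompact_Icc.prod isCompact_Icc)).mono_set
    (Set.prod_mono Set.Ico_subset_Icc_self Set.Ico_subset_Icc_self)

/- The two indicators differ only when `x` shares a coordinate with `z`, as `B_x` is open at its
upper end while `C_z` is closed at its lower end. -/
lemma box_indicator_ae_eq_chiC {z : ℝ × ℝ} (hz : z ∈ unitSq) :
    ∀ᵐ x ∂volume.restrict unitSq,
      (if 0 ≤ z.1 ∧ z.1 < x.1 ∧ 0 ≤ z.2 ∧ z.2 < x.2 then (1 : ℝ) else 0) = chiC z x := by
  have hfst : ∀ᵐ x : ℝ × ℝ, x.1 ≠ z.1 :=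
    Measure.quasiMeasurePreserving_fst.ae (Measure.ae_ne volume z.1)
  have hsnd : ∀ᵐ x : ℝ × ℝ, x.2 ≠ z.2 :=
    Measure.quasiMeasurePreserving_snd.ae (Measure.ae_ne volume z.2)
  filter_upwards [ae_restrict_of_ae hfst, ae_restrict_of_ae hsnd,
    ae_restrict_mem measurableSet_unitSq] with x hx₁ hx₂ hx
  simp only [chiC, hz.1.1, hz.2.1, hx.1.2, hx.2.2, true_and, and_true,
    hx₁.symm.le_iff_lt, hx₂.symm.le_iff_lt]

lemma disc_ae_eq_sum_chiC {N : ℕ} {p : Fin N → ℝ × ℝ} (hp : ∀ i, p i ∈ unitSq) :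
    ∀ᵐ x ∂volume.restrict unitSq, disc N p x = ∑ i, chiC (p i) x - N * (x.1 * x.2) := by
  filter_upwards [ae_all_iff.2 fun i ↦ box_indicator_ae_eq_chiC (hp i)] with x hx
  rw [disc, Finset.sum_congr rfl fun i _ ↦ hx i, mul_assoc]

section Haar

variable {j m : ℕ × ℕ}

lemma measurable_haar : Measurable (haar j m) :=
  (measurable_haar1.comp measurable_fst).mul (measurable_haar1.comp measurable_snd)

lemma abs_haar_le_one (x : ℝ × ℝ) : |haar j m x| ≤ 1 := by
  rw [haar, abs_mul]
  exact mul_le_one₀ (abs_haar1_le_one _) (abs_nonneg _) (abs_haar1_le_one _)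

lemma integrableOn_mul_haar {s : Set (ℝ × ℝ)} {f : ℝ × ℝ → ℝ}
    (hf : IntegrableOn f s) : IntegrableOn (fun x ↦ f x * haar j m x) s :=
  hf.mul_bdd (c := 1) measurable_haar.aestronglyMeasurable (.of_forall abs_haar_le_one)

lemma setIntegral_mul_mul_haar (f g : ℝ → ℝ) :
    ∫ x in unitSq, f x.1 * g x.2 * haar j m x =
      (∫ t in Set.Ico 0 1, f t * haar1 j.1 m.1 t) *
        ∫ t in Set.Ico 0 1, g t * haar1 j.2 m.2 t := by
  have hfactor (x : ℝ × ℝ) : f x.1 * g x.2 * haar j m x =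
      f x.1 * haar1 j.1 m.1 x.1 * (g x.2 * haar1 j.2 m.2 x.2) := mul_mul_mul_comm _ _ _ _
  simp only [hfactor]
  exact setIntegral_prod_mul (μ := volume) (ν := volume) (fun t ↦ f t * haar1 j.1 m.1 t)
    (fun t ↦ g t * haar1 j.2 m.2 t) (Set.Ico 0 1) (Set.Ico 0 1)

lemma setIntegral_fst_mul_snd_mul_haar (hm₁ : m.1 < 2 ^ j.1) (hm₂ : m.2 < 2 ^ j.2) :
    ∫ x in unitSq, x.1 * x.2 * haar j m x = 1 / 2 ^ (2 * (j.1 + j.2) + 4) := by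
  rw [setIntegral_mul_mul_haar (fun t ↦ t) (fun t ↦ t), setIntegral_id_mul_haar1 hm₁,
    setIntegral_id_mul_haar1 hm₂]
  ring

lemma setIntegral_chiC_mul_haar_eq_zero (hm₁ : m.1 < 2 ^ j.1) (hm₂ : m.2 < 2 ^ j.2) {z : ℝ × ℝ}
    (hz : z ∉ dyadic j m) : ∫ x in unitSq, chiC z x * haar j m x = 0 := by
  simp only [chiC_eq_mul]
  rw [setIntegral_mul_mul_haar]
  have hcoord : z.1 ∉ dyadicIco j.1 m.1 ∨ z.2 ∉ dyadicIco j.2 m.2 := not_and_or.1 hz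
  rcases hcoord with hfst | hsnd
  · rw [setIntegral_indicator_Ico_mul_haar1_eq_zero hm₁ hfst, zero_mul]
  · rw [setIntegral_indicator_Ico_mul_haar1_eq_zero hm₂ hsnd, mul_zero]

lemma setIntegral_disc_mul_haar {N : ℕ} {p : Fin N → ℝ × ℝ} (hp : ∀ i, p i ∈ unitSq) :
    ∫ x in unitSq, disc N p x * haar j m x =
      ∑ i, (∫ x in unitSq, chiC (p i) x * haar j m x) -
        N * ∫ x in unitSq, x.1 * x.2 * haar j m x := by
  have hchiC (i : Fin N) : IntegrableOn (fun x ↦ chiC (p i) x * haar j m x) unitSq :=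
    integrableOn_mul_haar (integrableOn_chiC (p i))
  have hlinear : IntegrableOn (fun x ↦ x.1 * x.2 * haar j m x) unitSq :=
    integrableOn_mul_haar integrableOn_fst_mul_snd
  calc ∫ x in unitSq, disc N p x * haar j m x
    _ = ∫ x in unitSq, (∑ i, chiC (p i) x * haar j m x - N * (x.1 * x.2 * haar j m x)) := by
      refine integral_congr_ae ?_
      filter_upwards [disc_ae_eq_sum_chiC hp] with x hx
      rw [hx, sub_mul, Finset.sum_mul, mul_assoc (N : ℝ)]
    _ = _ := by
      rw [integral_sub (integrable_finsetSum _ fun i _ ↦ hchiC i) (hlinear.const_mul _),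
        integral_finsetSum _ fun i _ ↦ hchiC i, integral_const_mul]

end Haar

open Classical in
theorem haar_coeff_one_point_general {N : ℕ} {p : Fin N → ℝ × ℝ} (hp : ∀ i, p i ∈ unitSq)
    {j m : ℕ × ℕ} (hm₁ : m.1 < 2 ^ j.1) (hm₂ : m.2 < 2 ^ j.2) :
    ∫ x in unitSq, disc N p x * haar j m x =
      (∑ i with p i ∈ dyadic j m, ∫ x in unitSq, chiC (p i) x * haar j m x) -
        (N : ℝ) / 2 ^ (2 * (j.1 + j.2) + 4) := by
  have hsupport (i : Fin N) (hne : ∫ x in unitSq, chiC (p i) x * haar j m x ≠ 0) :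
      p i ∈ dyadic j m :=
    not_imp_comm.1 (setIntegral_chiC_mul_haar_eq_zero hm₁ hm₂) hne
  rw [setIntegral_disc_mul_haar hp, setIntegral_fst_mul_snd_mul_haar hm₁ hm₂, mul_one_div,
    Finset.sum_filter_of_ne fun i _ ↦ hsupport i]

/-- If `I_{j,m}` contains exactly one point `z = p i₀` of the `N`-point set
`P ⊂ [0,1)²`, then the Haar coefficient of the discrepancy function is
`μ_{j,m} = μ_{j,m}^z − N·2^{-2|j|-4}` where `μ_{j,m}^z = ∫ χ_{C_z}·h_{j,m}`. -/
theorem haar_coeff_one_point (N : ℕ) (p : Fin N → ℝ × ℝ) (hp : ∀ i, p i ∈ unitSq)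
    (j m : ℕ × ℕ) (hm1 : m.1 < 2 ^ j.1) (hm2 : m.2 < 2 ^ j.2)
    (i₀ : Fin N) (hi₀ : p i₀ ∈ dyadic j m)
    (huniq : ∀ i, p i ∈ dyadic j m → i = i₀) :
    ∫ x in unitSq, disc N p x * haar j m x
      = (∫ x in unitSq, chiC (p i₀) x * haar j m x)
        - (N : ℝ) / 2 ^ (2 * (j.1 + j.2) + 4) := by
  classical
  have hpoints : Finset.univ.filter (fun i ↦ p i ∈ dyadic j m) = {i₀} :=
    Finset.eq_singleton_iff_unique_mem.2 ⟨by simpa using hi₀, by simpa using huniq⟩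
  rw [haar_coeff_one_point_general hp hm1 hm2, hpoints, Finset.sum_singleton]

end
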